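/- For every factor α of ω with |α| ≥ 2, there exist an integer n ≥ 0, an integer k with 2 ≤ k ≤ 4, letters i_1, …, i_k ∈ {0,1}, a word γ_0 with 0 ≤ |γ_0| < 2^n that is a suffix of 0^{(n)} or of 1^{(n)}, and a word γ_1 with 0 ≤ |γ_1| < 2^n that is a prefix of 0^{(n)} or of 1^{(n)}, such that α = γ_0 i_1^{(n)} i_2^{(n)} ⋯ i_k^{(n)} γ_1 (where γ_0 and γ_1 may be empty). -/

import Mathlib

/-- One-sided Thue–Morse sequence: parity of the binary digit sum. -/
def tm (n : ℕ) : ℕ := (Nat.digits 2 n).sum % 2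

/-- Two-sided Thue–Morse sequence `ω : ℤ → {0,1}`. -/
def tmZ (n : ℤ) : ℕ := if 0 ≤ n then tm n.toNat else tm (-n - 1).toNat

/-- The block `ω_[m, m+k-1]` of the two-sided Thue–Morse sequence. -/
def tmBlock (m : ℤ) (k : ℕ) : List ℕ := (List.range k).map fun j => tmZ (m + j)

/-- A (nonempty) word is a factor of the two-sided Thue–Morse sequence. -/
def IsFactor (α : List ℕ) : Prop := α ≠ [] ∧ ∃ m : ℤ, α = tmBlock m α.length

/-- The words `i⁽ⁿ⁾`: `blk i 0 = [i]`, `blk i (n+1) = blk i n ++ blk (1-i) n`. -/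
def blk : ℕ → ℕ → List ℕ
  | i, 0 => [i]
  | i, n + 1 => blk i n ++ blk (1 - i) n

/-!
At every scale `n`, the sequence `ω` is a concatenation of the words `0⁽ⁿ⁾` and `1⁽ⁿ⁾` along the
grid `2ⁿℤ`. Indeed `ω` takes opposite values at `2q` and `2q + 1`, and doubling an index either
keeps or flips the letter according to the sign of the index, so the values at `2ⁿ · 2q` and
`2ⁿ · (2q + 1)` are still opposite; hence the grid blocks pair up as `i⁽ⁿ⁾ (1 - i)⁽ⁿ⁾ = i⁽ⁿ⁺¹⁾`.
It therefore suffices to find a scale at which the window of the factor contains two to four whole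
grid cells. A window of length at most `4` has this property at scale `0`; a longer one contains at
least two cells of the grid `2ℤ`, and halving reduces to a shorter window.
-/

theorem tm_le_one (n : ℕ) : tm n ≤ 1 := by
  unfold tm; omega

theorem tm_two_mul (n : ℕ) : tm (2 * n) = tm n := by
  rcases n.eq_zero_or_pos with rfl | hn
  · rfl
  · simp [tm, Nat.digits_base_mul one_lt_two hn]

theorem tm_two_mul_add_one (n : ℕ) : tm (2 * n + 1) = 1 - tm n := by
  have hdigits : Nat.digits 2 (2 * n + 1) = 1 :: Nat.digits 2 n := by
    simpa [add_comm] using Nat.digits_add 2 one_lt_two 1 n one_lt_two (Or.inl one_ne_zero)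
  simp only [tm, hdigits, List.sum_cons]
  omega

@[norm_cast]
theorem tmZ_natCast (n : ℕ) : tmZ n = tm n := by
  simp [tmZ]

theorem tmZ_neg_sub_one (q : ℤ) : tmZ (-q - 1) = tmZ q := by
  unfold tmZ
  split_ifs <;> first | omega | (congr 1; omega)

theorem tmZ_le_one (q : ℤ) : tmZ q ≤ 1 := by
  unfold tmZ
  split_ifs <;> exact tm_le_one _

theorem tmZ_eq_zero_or_one (q : ℤ) : tmZ q = 0 ∨ tmZ q = 1 :=
  Nat.le_one_iff_eq_zero_or_eq_one.mp (tmZ_le_one q)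

theorem tmZ_two_mul_of_nonneg {q : ℤ} (hq : 0 ≤ q) : tmZ (2 * q) = tmZ q := by
  lift q to ℕ using hq
  exact_mod_cast tm_two_mul q

theorem tmZ_two_mul_add_one_of_nonneg {q : ℤ} (hq : 0 ≤ q) : tmZ (2 * q + 1) = 1 - tmZ q := by
  lift q to ℕ using hq
  exact_mod_cast tm_two_mul_add_one q

theorem tmZ_two_mul_of_neg {q : ℤ} (hq : q < 0) : tmZ (2 * q) = 1 - tmZ q :=
  calc tmZ (2 * q) = tmZ (2 * (-q - 1) + 1) := by rw [← tmZ_neg_sub_one]; ring_nf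
    _ = 1 - tmZ (-q - 1) := tmZ_two_mul_add_one_of_nonneg (by omega)
    _ = 1 - tmZ q := by rw [tmZ_neg_sub_one]

theorem tmZ_two_mul_add_one_of_neg {q : ℤ} (hq : q < 0) : tmZ (2 * q + 1) = tmZ q :=
  calc tmZ (2 * q + 1) = tmZ (2 * (-q - 1)) := by rw [← tmZ_neg_sub_one]; ring_nf
    _ = tmZ (-q - 1) := tmZ_two_mul_of_nonneg (by omega)
    _ = tmZ q := tmZ_neg_sub_one q

theorem tmZ_two_mul_add_one (q : ℤ) : tmZ (2 * q + 1) = 1 - tmZ (2 * q) := by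
  rcases le_or_gt 0 q with hq | hq
  · rw [tmZ_two_mul_add_one_of_nonneg hq, tmZ_two_mul_of_nonneg hq]
  · rw [tmZ_two_mul_add_one_of_neg hq, tmZ_two_mul_of_neg hq, Nat.sub_sub_self (tmZ_le_one q)]

theorem tmZ_two_pow_mul_two_mul_add_one (n : ℕ) (q : ℤ) :
    tmZ (2 ^ n * (2 * q + 1)) = 1 - tmZ (2 ^ n * (2 * q)) := by
  induction n with
  | zero => simpa using tmZ_two_mul_add_one q
  | succ n ih =>
    rw [pow_succ', mul_assoc, mul_assoc]
    rcases le_or_gt 0 q with hq | hq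
    · rw [tmZ_two_mul_of_nonneg (by positivity), tmZ_two_mul_of_nonneg (by positivity), ih]
    · have hpow : (0 : ℤ) < 2 ^ n := by positivity
      rw [tmZ_two_mul_of_neg (mul_neg_of_pos_of_neg hpow (by omega)),
        tmZ_two_mul_of_neg (mul_neg_of_pos_of_neg hpow (by omega)), ih]

-- In `tmBlock` the coercion to `ℤ` is applied to the list `List.range k`, not to its entries.
theorem tmBlock_eq_map_range (m : ℤ) (k : ℕ) :
    tmBlock m k = (List.range k).map fun j : ℕ => tmZ (m + j) := by
  simp [tmBlock, ← List.map_eq_flatMap]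

theorem length_tmBlock (m : ℤ) (k : ℕ) : (tmBlock m k).length = k := by
  simp [tmBlock_eq_map_range]

theorem tmBlock_add (m : ℤ) (k l : ℕ) :
    tmBlock m (k + l) = tmBlock m k ++ tmBlock (m + k) l := by
  simp [tmBlock_eq_map_range, List.range_add, add_assoc]

theorem tmBlock_prefix (m : ℤ) {k l : ℕ} (h : k ≤ l) : tmBlock m k <+: tmBlock m l := by
  obtain ⟨d, rfl⟩ := Nat.exists_eq_add_of_le h
  exact ⟨_, (tmBlock_add m k d).symm⟩

theorem tmBlock_suffix (m : ℤ) {k l : ℕ} (h : k ≤ l) :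
    tmBlock m k <:+ tmBlock (m + k - l) l := by
  obtain ⟨d, rfl⟩ := Nat.exists_eq_add_of_le' h
  refine ⟨tmBlock (m - d) d, ?_⟩
  have hstart : m + k - (d + k : ℕ) = m - d := by push_cast; ring
  rw [hstart, tmBlock_add, sub_add_cancel]

theorem tmBlock_two_pow (n : ℕ) (q : ℤ) :
    tmBlock (2 ^ n * q) (2 ^ n) = blk (tmZ (2 ^ n * q)) n := by
  induction n generalizing q with
  | zero => simp [tmBlock_eq_map_range, blk]
  | succ n ih =>
    have hleft : (2 : ℤ) ^ (n + 1) * q = 2 ^ n * (2 * q) := by ring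
    have hright : (2 : ℤ) ^ n * (2 * q) + (2 ^ n : ℕ) = 2 ^ n * (2 * q + 1) := by push_cast; ring
    calc tmBlock (2 ^ (n + 1) * q) (2 ^ (n + 1))
        = tmBlock (2 ^ n * (2 * q)) (2 ^ n) ++ tmBlock (2 ^ n * (2 * q + 1)) (2 ^ n) := by
          rw [hleft, pow_succ, mul_two, tmBlock_add, hright]
      _ = blk (tmZ (2 ^ n * (2 * q))) n ++ blk (1 - tmZ (2 ^ n * (2 * q))) n := by
          rw [ih, ih, tmZ_two_pow_mul_two_mul_add_one]
      _ = blk (tmZ (2 ^ (n + 1) * q)) (n + 1) := by rw [hleft, blk]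

theorem tmBlock_two_pow_eq_blk_zero_or_one (n : ℕ) (q : ℤ) :
    tmBlock (2 ^ n * q) (2 ^ n) = blk 0 n ∨ tmBlock (2 ^ n * q) (2 ^ n) = blk 1 n := by
  rw [tmBlock_two_pow]
  rcases tmZ_eq_zero_or_one (2 ^ n * q) with h | h <;> simp [h]

theorem tmBlock_two_pow_mul (n k : ℕ) (a : ℤ) :
    tmBlock (2 ^ n * a) (2 ^ n * k) =
      (((List.range k).map fun j : ℕ => tmZ (2 ^ n * (a + j))).map fun i => blk i n).flatten := by
  induction k with
  | zero => simp [tmBlock_eq_map_range]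
  | succ k ih =>
    have hlast : (2 : ℤ) ^ n * a + (2 ^ n * k : ℕ) = 2 ^ n * (a + k) := by push_cast; ring
    rw [Nat.mul_succ, tmBlock_add, ih, hlast, tmBlock_two_pow, List.range_succ]
    simp

theorem tmBlock_prefix_blk {n k : ℕ} (q : ℤ) (hk : k ≤ 2 ^ n) :
    tmBlock (2 ^ n * q) k <+: blk 0 n ∨ tmBlock (2 ^ n * q) k <+: blk 1 n := by
  have hprefix : tmBlock (2 ^ n * q) k <+: tmBlock (2 ^ n * q) (2 ^ n) := tmBlock_prefix _ hk
  rcases tmBlock_two_pow_eq_blk_zero_or_one n q with h | h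
  · exact Or.inl (h ▸ hprefix)
  · exact Or.inr (h ▸ hprefix)

theorem tmBlock_suffix_blk {n k : ℕ} {m q : ℤ} (hm : m + k = 2 ^ n * q) (hk : k ≤ 2 ^ n) :
    tmBlock m k <:+ blk 0 n ∨ tmBlock m k <:+ blk 1 n := by
  have hsuffix : tmBlock m k <:+ tmBlock (2 ^ n * (q - 1)) (2 ^ n) := by
    have hstart : m + k - (2 ^ n : ℕ) = 2 ^ n * (q - 1) := by rw [hm]; push_cast; ring
    exact hstart ▸ tmBlock_suffix m hk
  rcases tmBlock_two_pow_eq_blk_zero_or_one n (q - 1) with h | h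
  · exact Or.inl (h ▸ hsuffix)
  · exact Or.inr (h ▸ hsuffix)

theorem exists_two_pow_grid_decomposition (m : ℤ) {L : ℕ} (hL : 2 ≤ L) :
    ∃ (n k u v : ℕ) (a : ℤ), 2 ≤ k ∧ k ≤ 4 ∧ u < 2 ^ n ∧ v < 2 ^ n ∧
      m + u = 2 ^ n * a ∧ L = u + 2 ^ n * k + v := by
  induction L using Nat.strong_induction_on generalizing m with
  | _ L ih =>
    rcases le_or_gt L 4 with hL4 | hL4
    · exact ⟨0, L, 0, 0, m, hL, hL4, by simp, by simp, by simp, by simp⟩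
    · obtain ⟨r, m', hr, hm'⟩ : ∃ (r : ℕ) (m' : ℤ), r < 2 ∧ m + r = 2 * m' :=
        ⟨(m % 2).toNat, (m + 1) / 2, by omega, by omega⟩
      obtain ⟨s, L', hs, hL'⟩ : ∃ s L' : ℕ, s < 2 ∧ L = r + 2 * L' + s :=
        ⟨(L - r) % 2, (L - r) / 2, by omega, by omega⟩
      obtain ⟨n, k, u, v, a, hk2, hk4, hu, hv, hstart, hlen⟩ :=
        ih L' (by omega) m' (by omega)
      refine ⟨n + 1, k, r + 2 * u, 2 * v + s, a, hk2, hk4, by omega, by omega, ?_, ?_⟩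
      · push_cast
        linear_combination hm' + 2 * hstart
      · rw [hL', hlen]
        ring

/-- Every factor `α` of the two-sided Thue–Morse sequence with `|α| ≥ 2` can be written as
`γ₀ i₁⁽ⁿ⁾ ⋯ i_k⁽ⁿ⁾ γ₁` with `2 ≤ k ≤ 4`, where `γ₀` is a (possibly empty) suffix of `0⁽ⁿ⁾`
or `1⁽ⁿ⁾` and `γ₁` is a (possibly empty) prefix of `0⁽ⁿ⁾` or `1⁽ⁿ⁾`, both of length `< 2ⁿ`. -/
theorem factor_blk_decomposition (α : List ℕ) (hα : IsFactor α) (hlen : 2 ≤ α.length) :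
    ∃ (n : ℕ) (is : List ℕ) (γ₀ γ₁ : List ℕ),
      2 ≤ is.length ∧ is.length ≤ 4 ∧ (∀ i ∈ is, i = 0 ∨ i = 1) ∧
      γ₀.length < 2 ^ n ∧ (γ₀ <:+ blk 0 n ∨ γ₀ <:+ blk 1 n) ∧
      γ₁.length < 2 ^ n ∧ (γ₁ <+: blk 0 n ∨ γ₁ <+: blk 1 n) ∧
      α = γ₀ ++ (is.map fun i => blk i n).flatten ++ γ₁ := by
  obtain ⟨-, m, hm⟩ := hα
  obtain ⟨n, k, u, v, a, hk2, hk4, hu, hv, hstart, hL⟩ :=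
    exists_two_pow_grid_decomposition m hlen
  have hend : m + (u + 2 ^ n * k : ℕ) = 2 ^ n * (a + k) := by
    push_cast
    linear_combination hstart
  refine ⟨n, (List.range k).map fun j : ℕ => tmZ (2 ^ n * (a + j)), tmBlock m u,
    tmBlock (2 ^ n * (a + k)) v, by simpa, by simpa, ?_, by rwa [length_tmBlock],
    tmBlock_suffix_blk hstart hu.le, by rwa [length_tmBlock],
    tmBlock_prefix_blk (a + k) hv.le, ?_⟩
  · simp only [List.forall_mem_map]
    exact fun j _ => tmZ_eq_zero_or_one _
  · calc α = tmBlock m (u + 2 ^ n * k + v) := hL ▸ hm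
      _ = tmBlock m u ++ tmBlock (2 ^ n * a) (2 ^ n * k) ++ tmBlock (2 ^ n * (a + k)) v := by
          rw [tmBlock_add, hend, tmBlock_add, hstart]
      _ = _ := by rw [tmBlock_two_pow_mul]
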